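/- Let G be a finite connected undirected multigraph and A a finite Abelian group. Then the number of balanced functions h:V∪E→A equals |A|^{|V|+con₃(G)−1}, where con₃(G) is the number of 3-edge-connected equivalence classes of vertices of G. -/

import Mathlib

open Finset

/-- A finite undirected multigraph: each edge `e : E` has an unordered pair of
endpoints `ends e : Sym2 V`.  Loops and parallel edges are allowed and the graph
need not be connected. -/
structure Multigraph (V E : Type*) where
  ends : E → Sym2 V

namespace Multigraph

variable {V E : Type*}

/-- `G.IsChain x y p` : `p` is an alternating sequence `v₁,e₁,…,vₙ,eₙ` (encoded as a
list of vertex-edge pairs) which forms a walk from `x` to `y` (the final vertex `y`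
is omitted, i.e. this is "truncated"). -/
def IsChain (G : Multigraph V E) : V → V → List (V × E) → Prop
  | x, y, [] => x = y
  | x, y, (v, e) :: rest => v = x ∧ ∃ w, G.ends e = s(x, w) ∧ G.IsChain w y rest

/-- A truncated trail (ttrail) from `x` to `y`: an alternating walk with no repeated
edges, final vertex omitted. -/
def IsTtrail (G : Multigraph V E) (x y : V) (p : List (V × E)) : Prop :=
  G.IsChain x y p ∧ (p.map Prod.snd).Nodup

/-- A cycle: a closed ttrail with no repeated vertices. -/
def IsCycle (G : Multigraph V E) (x : V) (p : List (V × E)) : Prop :=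
  G.IsTtrail x x p ∧ (p.map Prod.fst).Nodup

/-- Two ttrails are edge-disjoint if they have no common edges. -/
def EdgeDisjoint (p q : List (V × E)) : Prop :=
  ∀ e, e ∈ p.map Prod.snd → e ∉ q.map Prod.snd

/-- `k`-edge-connectivity: two distinct vertices are `k`-edge-connected if there are
`k` pairwise edge-disjoint ttrails between them; every vertex is `k`-edge-connected
to itself. -/
def KConn (G : Multigraph V E) (k : ℕ) (v w : V) : Prop :=
  v = w ∨ ∃ p : Fin k → List (V × E),
    (∀ i, G.IsTtrail v w (p i)) ∧ ∀ i j, i ≠ j → EdgeDisjoint (p i) (p j)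

/-- `conk G k` : the number of equivalence classes of `k`-edge-connected vertices. -/
noncomputable def conk (G : Multigraph V E) (k : ℕ) : ℕ :=
  Nat.card (Quotient (Relation.EqvGen.setoid (G.KConn k)))

/-- The number of connected components of `G`. -/
noncomputable def con (G : Multigraph V E) : ℕ := G.conk 1

section Homology

variable [Fintype V] [Fintype E] [DecidableEq V] [DecidableEq E]

/-- The vector in `F₂^V` which is the sum of the two endpoints of the edge `e`
(so a loop is sent to `0`). -/
def edgeVec (G : Multigraph V E) (e : E) : V → ZMod 2 := fun v =>
  Sym2.lift ⟨fun a b => (if v = a then (1 : ZMod 2) else 0) + (if v = b then 1 else 0),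
    fun _ _ => add_comm _ _⟩ (G.ends e)

/-- The boundary map `δ : F₂^E → F₂^V`, sending each edge to the sum of its two
adjacent vertices. -/
def boundary (G : Multigraph V E) : (E → ZMod 2) →ₗ[ZMod 2] (V → ZMod 2) where
  toFun c := fun v => ∑ e, c e * G.edgeVec e v
  map_add' c d := by
    funext v
    simp [add_mul, Finset.sum_add_distrib]
  map_smul' r c := by
    funext v
    simp [Finset.mul_sum, mul_assoc]

/-- The Cycle Space of `G` : the kernel of the boundary map. -/
def cycleSpace (G : Multigraph V E) : Submodule (ZMod 2) (E → ZMod 2) :=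
  LinearMap.ker G.boundary

/-- The indicator vector of a vertex in `F₂^V`. -/
def vert (v : V) : V → ZMod 2 := fun w => if w = v then 1 else 0

/-- A `k`-weak homological cycle: a homological path between two `k`-edge-connected
vertices. -/
def IsWeakCycle (G : Multigraph V E) (k : ℕ) (c : E → ZMod 2) : Prop :=
  ∃ v w, G.KConn k v w ∧ G.boundary c = vert v + vert w

/-- The `k`-Weak Cycle Space: the span of all `k`-weak homological cycles. -/
def weakCycleSpace (G : Multigraph V E) (k : ℕ) : Submodule (ZMod 2) (E → ZMod 2) :=
  Submodule.span (ZMod 2) {c | G.IsWeakCycle k c}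

/-- `eps p` : the set of edges of the ttrail `p`, as a vector in `F₂^E`. -/
def eps (p : List (V × E)) : E → ZMod 2 := fun e => if e ∈ p.map Prod.snd then 1 else 0

/-- The `F₂`-linear extension of `f : E → A` to subsets of `E`: the sum of `f` over
the edges of the subset `S`. -/
def fSum {A : Type*} [AddCommGroup A] (f : E → A) (S : E → ZMod 2) : A :=
  ∑ e ∈ Finset.univ.filter fun e => S e = 1, f e

end Homology

section Balanced

variable {A : Type*} [AddCommGroup A]

/-- The sum `g(v₁)+f(e₁)+…+g(vₙ)+f(eₙ)` of the values of a vertex-function `g` and an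
edge-function `f` along a ttrail `v₁,e₁,…,vₙ,eₙ`. -/
def pathSum (g : V → A) (f : E → A) (p : List (V × E)) : A :=
  (p.map fun ve => g ve.1 + f ve.2).sum

/-- The sum `h(v₁)+h(e₁)+…+h(vₙ)+h(eₙ)` of the values of `h : V ∪ E → A` along a
ttrail `v₁,e₁,…,vₙ,eₙ`. -/
def wSum (h : V ⊕ E → A) (p : List (V × E)) : A :=
  (p.map fun ve => h (Sum.inl ve.1) + h (Sum.inr ve.2)).sum

lemma pathSum_cons (g : V → A) (f : E → A) (a : V × E) (t : List (V × E)) :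
    pathSum g f (a :: t) = (g a.1 + f a.2) + pathSum g f t := by
  simp [pathSum]

lemma pathSum_zero (p : List (V × E)) : pathSum (0 : V → A) (0 : E → A) p = 0 := by
  induction p with
  | nil => simp [pathSum]
  | cons a t ih => simp [pathSum_cons, ih]

lemma pathSum_add (g g' : V → A) (f f' : E → A) (p : List (V × E)) :
    pathSum (g + g') (f + f') p = pathSum g f p + pathSum g' f' p := by
  induction p with
  | nil => simp [pathSum]
  | cons a t ih => simp only [pathSum_cons, Pi.add_apply, ih]; abel

lemma pathSum_neg (g : V → A) (f : E → A) (p : List (V × E)) :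
    pathSum (-g) (-f) p = -pathSum g f p := by
  induction p with
  | nil => simp [pathSum]
  | cons a t ih => simp only [pathSum_cons, Pi.neg_apply, ih]; abel

lemma wSum_cons (h : V ⊕ E → A) (a : V × E) (t : List (V × E)) :
    wSum h (a :: t) = (h (Sum.inl a.1) + h (Sum.inr a.2)) + wSum h t := by
  simp [wSum]

lemma wSum_zero (p : List (V × E)) : wSum (0 : V ⊕ E → A) p = 0 := by
  induction p with
  | nil => simp [wSum]
  | cons a t ih => simp [wSum_cons, ih]

lemma wSum_add (h h' : V ⊕ E → A) (p : List (V × E)) :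
    wSum (h + h') p = wSum h p + wSum h' p := by
  induction p with
  | nil => simp [wSum]
  | cons a t ih => simp only [wSum_cons, Pi.add_apply, ih]; abel

lemma wSum_neg (h : V ⊕ E → A) (p : List (V × E)) :
    wSum (-h) p = -wSum h p := by
  induction p with
  | nil => simp [wSum]
  | cons a t ih => simp only [wSum_cons, Pi.neg_apply, ih]; abel

/-- A function `f : E → A` is balanced if the sum of its values along every closed
ttrail of `G` is zero. -/
def BalancedE (G : Multigraph V E) (f : E → A) : Prop :=
  ∀ x p, G.IsTtrail x x p → pathSum (0 : V → A) f p = 0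

/-- A function `g : V → A` is balanceable if some `f : E → A` balances it, i.e. the
sum of the values of `g` and `f` along every closed ttrail of `G` is zero. -/
def Balanceable (G : Multigraph V E) (g : V → A) : Prop :=
  ∃ f : E → A, ∀ x p, G.IsTtrail x x p → pathSum g f p = 0

/-- A function `h : V ∪ E → A` is balanced if the sum of its values along every
closed ttrail of `G` is zero. -/
def BalancedW (G : Multigraph V E) (h : V ⊕ E → A) : Prop :=
  ∀ x p, G.IsTtrail x x p → wSum h p = 0

/-- `H(E,A)` : the group of balanced functions from `E` to `A`. -/
def Hgroup (G : Multigraph V E) (A : Type*) [AddCommGroup A] : AddSubgroup (E → A) where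
  carrier := {f | G.BalancedE f}
  zero_mem' := fun _ p _ => pathSum_zero p
  add_mem' := by
    intro f f' hf hf' x p hp
    have h := pathSum_add (0 : V → A) 0 f f' p
    rw [add_zero] at h
    rw [h, hf x p hp, hf' x p hp, add_zero]
  neg_mem' := by
    intro f hf x p hp
    have h := pathSum_neg (0 : V → A) f p
    rw [neg_zero] at h
    rw [h, hf x p hp, neg_zero]

/-- `B(V,A)` : the group of balanceable functions from `V` to `A`. -/
def Bgroup (G : Multigraph V E) (A : Type*) [AddCommGroup A] : AddSubgroup (V → A) where
  carrier := {g | G.Balanceable g}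
  zero_mem' := ⟨0, fun _ p _ => pathSum_zero p⟩
  add_mem' := by
    rintro g g' ⟨f, hf⟩ ⟨f', hf'⟩
    exact ⟨f + f', fun x p hp => by rw [pathSum_add, hf x p hp, hf' x p hp, add_zero]⟩
  neg_mem' := by
    rintro g ⟨f, hf⟩
    exact ⟨-f, fun x p hp => by rw [pathSum_neg, hf x p hp, neg_zero]⟩

/-- `W(V ∪ E, A)` : the group of balanced functions from `V ∪ E` to `A`. -/
def Wgroup (G : Multigraph V E) (A : Type*) [AddCommGroup A] : AddSubgroup (V ⊕ E → A) where
  carrier := {h | G.BalancedW h}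
  zero_mem' := fun _ p _ => wSum_zero p
  add_mem' := by
    intro h h' hh hh' x p hp
    rw [wSum_add, hh x p hp, hh' x p hp, add_zero]
  neg_mem' := by
    intro h hh x p hp
    rw [wSum_neg, hh x p hp, neg_zero]

end Balanced

/-- A `3`-weakly closed ttrail (a ttrail between `3`-edge-connected vertices) which is
short: no inner vertex is `3`-edge-connected to the initial vertex. -/
def ShortW (G : Multigraph V E) (x y : V) (p : List (V × E)) : Prop :=
  G.IsTtrail x y p ∧ G.KConn 3 x y ∧ ∀ v ∈ (p.map Prod.fst).tail, ¬ G.KConn 3 v x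

/-- `G.ShortChain x y L` : `L` is a list of nontrivial short `3`-weakly closed ttrails
which concatenate into a ttrail from `x` to `y`. -/
def ShortChain (G : Multigraph V E) : V → V → List (List (V × E)) → Prop
  | x, y, [] => x = y
  | x, y, s :: rest => s ≠ [] ∧ ∃ z, G.ShortW x z s ∧ G.ShortChain z y rest

/-- `A₂` : the subgroup of elements of order dividing `2` in `A`. -/
def torsion2 (A : Type*) [AddCommGroup A] : AddSubgroup A where
  carrier := {a | 2 • a = 0}
  zero_mem' := by simp
  add_mem' := by
    intro a b ha hb
    simp only [Set.mem_setOf_eq] at *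
    rw [smul_add, ha, hb, add_zero]
  neg_mem' := by
    intro a ha
    simp only [Set.mem_setOf_eq] at *
    rw [smul_neg, ha, neg_zero]

/-- `2A` : the image of the doubling map `a ↦ 2a`. -/
def double2 (A : Type*) [AddCommGroup A] : AddSubgroup A where
  carrier := {b | ∃ a, b = 2 • a}
  zero_mem' := ⟨0, by simp⟩
  add_mem' := by
    rintro a b ⟨x, rfl⟩ ⟨y, rfl⟩
    exact ⟨x + y, by rw [smul_add]⟩
  neg_mem' := by
    rintro a ⟨x, rfl⟩
    exact ⟨-x, by rw [smul_neg]⟩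

end Multigraph

/-!
The proof contracts non-loop edges one at a time. Let `e` be an edge with distinct ends `x`, `y`.
The balanced functions of `G / e` are exactly the balanced functions `h` of `G` for which both
steps `h(x) + h(e)` and `h(y) + h(e)` vanish. If `x` and `y` are 3-edge-connected, two trails
between them avoiding `e` force the two steps to be opposite, and one free parameter is lost. If
not, a cut with at most two edges separates them; shifting a function across this cut shows that
the two steps are independent, and two parameters are lost. In both cases the extension splits.

The exponent changes at the same rate: `|V|` drops by one, and by uncrossing cuts of size two,
contraction merges the classes of `x` and `y` without any further identification. The
max-flow min-cut argument translates between edge-disjoint trails and cuts.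
-/

namespace Multigraph

section Trails

variable {V E : Type*} {G : Multigraph V E} {v x y z : V} {e : E} {p q : List (V × E)}

lemma isChain_append : G.IsChain x z (p ++ q) ↔ ∃ y, G.IsChain x y p ∧ G.IsChain y z q := by
  induction p generalizing x with
  | nil => simp [IsChain]
  | cons d p ih => simp only [List.cons_append, IsChain, ih]; grind

lemma isChain_append_cons : G.IsChain x y (p ++ (v, e) :: q) ↔
    G.IsChain x v p ∧ ∃ w, G.ends e = s(v, w) ∧ G.IsChain w y q := by
  simp only [isChain_append, IsChain]
  grind

lemma IsTtrail.nil (x : V) : G.IsTtrail x x [] :=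
  ⟨rfl, List.nodup_nil⟩

lemma isTtrail_singleton (he : G.ends e = s(x, y)) : G.IsTtrail x y [(x, e)] :=
  ⟨⟨rfl, y, he, rfl⟩, List.nodup_singleton e⟩

lemma IsTtrail.append (hp : G.IsTtrail x y p) (hq : G.IsTtrail y z q) (hpq : EdgeDisjoint p q) :
    G.IsTtrail x z (p ++ q) := by
  refine ⟨isChain_append.2 ⟨y, hp.1, hq.1⟩, ?_⟩
  rw [List.map_append]
  exact hp.2.append hq.2 hpq

lemma IsTtrail.append_singleton (hp : G.IsTtrail x y p) (he : G.ends e = s(y, z))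
    (hep : e ∉ p.map Prod.snd) : G.IsTtrail x z (p ++ [(y, e)]) :=
  hp.append (isTtrail_singleton he) fun f hf hfe =>
    hep (by rwa [List.mem_singleton.1 hfe] at hf)

lemma IsTtrail.cons (he : G.ends e = s(x, y)) (hp : G.IsTtrail y z p)
    (hep : e ∉ p.map Prod.snd) : G.IsTtrail x z ((x, e) :: p) :=
  ⟨⟨rfl, y, he, hp.1⟩, List.nodup_cons.2 ⟨hep, hp.2⟩⟩

lemma IsTtrail.rotate (h : G.IsTtrail x x (p ++ (v, e) :: q)) :
    G.IsTtrail v v ((v, e) :: (q ++ p)) := by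
  obtain ⟨hp, w, he, hq⟩ := isChain_append_cons.1 h.1
  refine ⟨⟨rfl, w, he, isChain_append.2 ⟨x, hq, hp⟩⟩, ?_⟩
  exact (List.perm_append_comm.map Prod.snd).nodup_iff.1 h.2

lemma IsTtrail.exists_reverse (hp : G.IsTtrail x y p) :
    ∃ q, G.IsTtrail y x q ∧ ∀ e, e ∈ q.map Prod.snd ↔ e ∈ p.map Prod.snd := by
  induction p generalizing x with
  | nil => exact ⟨[], hp.1 ▸ .nil x, by simp⟩
  | cons d p ih =>
    obtain ⟨⟨-, w, he, hwy⟩, hnodup⟩ := hp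
    obtain ⟨hd, hp⟩ := List.nodup_cons.1 hnodup
    obtain ⟨q, hq, hqp⟩ := ih ⟨hwy, hp⟩
    refine ⟨q ++ [(w, d.2)], hq.append_singleton (he.trans Sym2.eq_swap) fun h => hd ((hqp _).1 h),
      fun e => ?_⟩
    simp only [List.map_append, List.mem_append, hqp]
    grind

lemma exists_isTtrail_or_closed (G : Multigraph V E) (allowed : V → E → Prop) (x y : V) :
    (∃ p, G.IsTtrail x y p ∧ ∀ d ∈ p, allowed d.1 d.2) ∨
      ∃ S : Set V, x ∈ S ∧ y ∉ S ∧
        ∀ e u w, G.ends e = s(u, w) → allowed u e → u ∈ S → w ∈ S := by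
  refine or_iff_not_imp_left.2 fun hy =>
    ⟨{v | ∃ p, G.IsTtrail x v p ∧ ∀ d ∈ p, allowed d.1 d.2}, ⟨[], .nil x, by simp⟩, hy, ?_⟩
  rintro e u w he hu ⟨p, hp, hallowed⟩
  by_cases hep : e ∈ p.map Prod.snd
  · obtain ⟨⟨v, e⟩, hvp, rfl⟩ := List.mem_map.1 hep
    obtain ⟨p₁, p₂, rfl⟩ := List.append_of_mem hvp
    obtain ⟨hp₁, w', he', -⟩ := isChain_append_cons.1 hp.1
    have hnodup := hp.2
    rw [List.map_append, List.map_cons, List.nodup_middle, List.nodup_cons] at hnodup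
    have hp₁ : G.IsTtrail x v p₁ := ⟨hp₁, hnodup.2.of_append_left⟩
    rcases Sym2.eq_iff.1 (he.symm.trans he') with ⟨rfl, rfl⟩ | ⟨rfl, rfl⟩
    · have hep₁ : e ∉ p₁.map Prod.snd := fun h => hnodup.1 (List.mem_append_left _ h)
      exact ⟨p₁ ++ [(u, e)], hp₁.append_singleton he hep₁,
        fun d hd => hallowed d (by grind)⟩
    · exact ⟨p₁, hp₁, fun d hd => hallowed d (List.mem_append_left _ hd)⟩
  · refine ⟨p ++ [(u, e)], hp.append_singleton he hep, fun d hd => ?_⟩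
    rcases List.mem_append.1 hd with hd | hd
    · exact hallowed d hd
    · rwa [List.mem_singleton.1 hd]

end Trails

section Cuts

variable {V E : Type*} {G : Multigraph V E} {S : Set V} {u w x y : V} {e : E}
  {p : List (V × E)} {k : ℕ}

/-- The cut `δ(S)`: the edges with one end in `S` and the other end outside `S`. -/
def cut (G : Multigraph V E) (S : Set V) : Set E :=
  {e | ∃ u ∈ S, ∃ w ∉ S, G.ends e = s(u, w)}

lemma mem_cut_iff (he : G.ends e = s(u, w)) : e ∈ G.cut S ↔ (u ∈ S ↔ w ∉ S) := by
  simp only [cut, Set.mem_ofPred_eq, he, Sym2.eq_iff]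
  grind

lemma cut_compl (G : Multigraph V E) (S : Set V) : G.cut Sᶜ = G.cut S := by
  ext e
  induction he : G.ends e with | h u w => ?_
  simp only [mem_cut_iff he, Set.mem_compl_iff]
  tauto

lemma IsChain.exists_mem_cut (hp : G.IsChain x y p) (hxy : x ∈ S ↔ y ∉ S) :
    ∃ e ∈ p.map Prod.snd, e ∈ G.cut S := by
  induction p generalizing x with
  | nil => cases hp; tauto
  | cons d p ih =>
    obtain ⟨-, w, he, hp⟩ := hp
    by_cases hd : d.2 ∈ G.cut S
    · exact ⟨d.2, by simp, hd⟩
    · obtain ⟨e, hep, heS⟩ := ih hp (by rw [mem_cut_iff he] at hd; tauto)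
      exact ⟨e, List.mem_cons_of_mem _ hep, heS⟩

lemma KConn.le_ncard_cut [Finite E] (h : G.KConn k x y) (hx : x ∈ S) (hy : y ∉ S) :
    k ≤ (G.cut S).ncard := by
  rcases h with rfl | ⟨p, hp, hdisj⟩
  · exact absurd hx hy
  choose e hep heS using fun i => (hp i).1.exists_mem_cut (S := S) (by tauto)
  have e_injective : Function.Injective e := fun i j hij => by
    by_contra hne
    exact hdisj i j hne _ (hep i) (hij ▸ hep j)
  calc k = (Set.range e).ncard := by
        rw [← Set.image_univ, Set.ncard_image_of_injective _ e_injective, Set.ncard_univ,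
          Nat.card_fin]
    _ ≤ (G.cut S).ncard := Set.ncard_le_ncard (Set.range_subset_iff.2 heS)

end Cuts

section Flows

variable {V E : Type*} {G : Multigraph V E} {S : Set V} {u w x y : V} {e : E} {f : E → ℤ}
  {p : List (V × E)}

/-- The first end of `e` in an arbitrary but fixed orientation of `G`. -/
noncomputable def tail (G : Multigraph V E) (e : E) : V := (G.ends e).out.1

/-- The second end of `e` in the orientation of `G` fixed by `Multigraph.tail`. -/
noncomputable def head (G : Multigraph V E) (e : E) : V := (G.ends e).out.2

lemma ends_eq_tail_head (G : Multigraph V E) (e : E) : G.ends e = s(G.tail e, G.head e) :=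
  (Quot.out_eq (G.ends e)).symm

open Classical in
/-- The sign with which leaving `v` along `e` agrees with the fixed orientation of `e`.
For a loop the sign is always `1`. -/
noncomputable def dartSign (G : Multigraph V E) (d : V × E) : ℤ :=
  if d.1 = G.tail d.2 then 1 else -1

lemma dartSign_eq (G : Multigraph V E) (d : V × E) : G.dartSign d = 1 ∨ G.dartSign d = -1 := by
  unfold dartSign
  split_ifs <;> simp

/-- The coboundary of a potential `φ`: its decrease along each edge, in the fixed orientation. -/
noncomputable def potentialDrop (G : Multigraph V E) (φ : V → ℤ) (e : E) : ℤ :=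
  φ (G.tail e) - φ (G.head e)

lemma potentialDrop_eq (he : G.ends e = s(u, w)) (φ : V → ℤ) :
    G.potentialDrop φ e = G.dartSign (u, e) * (φ u - φ w) := by
  rcases Sym2.eq_iff.1 ((G.ends_eq_tail_head e).symm.trans he) with ⟨hu, hw⟩ | ⟨hw, hu⟩
  · simp [potentialDrop, dartSign, hu, hw]
  · by_cases huw : u = w <;> simp [potentialDrop, dartSign, hu, hw, huw]

open Classical in
/-- The unit flow along a list of vertex-edge pairs. -/
noncomputable def trailFlow (G : Multigraph V E) (p : List (V × E)) (e : E) : ℤ :=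
  (p.map fun d => if d.2 = e then G.dartSign d else 0).sum

open Classical in
lemma trailFlow_cons (G : Multigraph V E) (d : V × E) (p : List (V × E)) (e : E) :
    G.trailFlow (d :: p) e = (if d.2 = e then G.dartSign d else 0) + G.trailFlow p e := by
  simp [trailFlow]

lemma trailFlow_of_notMem (hep : e ∉ p.map Prod.snd) : G.trailFlow p e = 0 := by
  refine List.sum_eq_zero fun n hn => ?_
  obtain ⟨d, hd, rfl⟩ := List.mem_map.1 hn
  exact if_neg fun h : d.2 = e => hep (h ▸ List.mem_map_of_mem hd)

lemma trailFlow_of_mem (hp : (p.map Prod.snd).Nodup) {d : V × E} (hd : d ∈ p) :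
    G.trailFlow p d.2 = G.dartSign d := by
  induction p with
  | nil => simp at hd
  | cons a p ih =>
    obtain ⟨ha, hp⟩ := List.nodup_cons.1 hp
    rcases List.mem_cons.1 hd with rfl | hd
    · rw [trailFlow_cons, if_pos rfl, trailFlow_of_notMem ha, add_zero]
    · have had : a.2 ≠ d.2 := fun h => ha (h ▸ List.mem_map_of_mem hd)
      rw [trailFlow_cons, if_neg had, ih hp hd, zero_add]

lemma potentialDrop_indicator_of_mem_cut (he : G.ends e = s(u, w)) (hu : u ∈ S) (hw : w ∉ S) :
    G.potentialDrop (S.indicator 1) e = G.dartSign (u, e) := by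
  simp [potentialDrop_eq he, hu, hw]

lemma potentialDrop_indicator_of_notMem_cut (he : e ∉ G.cut S) :
    G.potentialDrop (S.indicator 1) e = 0 := by
  rw [mem_cut_iff (G.ends_eq_tail_head e)] at he
  by_cases h : G.tail e ∈ S <;> simp_all [potentialDrop]

variable [Fintype E]

lemma sum_trailFlow_mul_potentialDrop (hp : G.IsChain x y p) (φ : V → ℤ) :
    ∑ e, G.trailFlow p e * G.potentialDrop φ e = φ x - φ y := by
  classical
  induction p generalizing x with
  | nil => cases hp; simp [trailFlow]
  | cons d p ih =>
    obtain ⟨rfl, w, he, hp⟩ := hp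
    have hd : G.dartSign d * G.potentialDrop φ d.2 = φ d.1 - φ w := by
      rw [potentialDrop_eq he]
      rcases G.dartSign_eq d with h | h <;> simp [h]
    simp [trailFlow_cons, add_mul, Finset.sum_add_distrib, ih hp, hd]

/-- An integral `x`-`y` flow of value `k` with unit edge capacities, in the fixed orientation.
Conservation is tested against potentials, so it needs no finiteness of `V`. -/
structure IsFlow (G : Multigraph V E) (x y : V) (k : ℤ) (f : E → ℤ) : Prop where
  abs_le_one (e : E) : |f e| ≤ 1
  sum_mul_potentialDrop (φ : V → ℤ) : ∑ e, f e * G.potentialDrop φ e = k * (φ x - φ y)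

namespace IsFlow

variable {k : ℤ}

lemma add_trailFlow (hf : G.IsFlow x y k f) (hp : G.IsTtrail x y p)
    (hfp : ∀ d ∈ p, f d.2 * G.dartSign (d.1, d.2) < 1) :
    G.IsFlow x y (k + 1) (f + G.trailFlow p) where
  abs_le_one e := by
    have hfe := hf.abs_le_one e
    by_cases hep : e ∈ p.map Prod.snd
    · obtain ⟨d, hd, rfl⟩ := List.mem_map.1 hep
      have hd' := hfp d hd
      rw [Pi.add_apply, trailFlow_of_mem hp.2 hd]
      rw [abs_le] at hfe ⊢
      rcases G.dartSign_eq d with h | h <;> rw [h] at hd' ⊢ <;> omega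
    · rwa [Pi.add_apply, trailFlow_of_notMem hep, add_zero]
  sum_mul_potentialDrop φ := by
    simp only [Pi.add_apply, add_mul, Finset.sum_add_distrib, hf.sum_mul_potentialDrop,
      sum_trailFlow_mul_potentialDrop hp.1, one_mul]

lemma eq_trailFlow (hf : G.IsFlow x y k f) (hp : (p.map Prod.snd).Nodup)
    (hfp : ∀ d ∈ p, 0 < f d.2 * G.dartSign (d.1, d.2)) (hep : e ∈ p.map Prod.snd) :
    f e = G.trailFlow p e := by
  obtain ⟨d, hd, rfl⟩ := List.mem_map.1 hep
  have hd' := hfp d hd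
  have hfe := abs_le.1 (hf.abs_le_one d.2)
  rw [trailFlow_of_mem hp hd]
  rcases G.dartSign_eq d with h | h <;> rw [h] at hd' ⊢ <;> omega

lemma sub_trailFlow (hf : G.IsFlow x y k f) (hp : G.IsTtrail x y p)
    (hfp : ∀ d ∈ p, 0 < f d.2 * G.dartSign (d.1, d.2)) :
    G.IsFlow x y (k - 1) (f - G.trailFlow p) where
  abs_le_one e := by
    by_cases hep : e ∈ p.map Prod.snd
    · simp [hf.eq_trailFlow hp.2 hfp hep]
    · simpa [trailFlow_of_notMem hep] using hf.abs_le_one e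
  sum_mul_potentialDrop φ := by
    simp only [Pi.sub_apply, sub_mul, Finset.sum_sub_distrib, hf.sum_mul_potentialDrop,
      sum_trailFlow_mul_potentialDrop hp.1, one_mul]

lemma sum_mul_potentialDrop_indicator (hf : G.IsFlow x y k f) (hx : x ∈ S) (hy : y ∉ S) :
    ∑ e, f e * G.potentialDrop (S.indicator 1) e = k := by
  simp [hf.sum_mul_potentialDrop, hx, hy]

lemma eq_ncard_cut (hf : G.IsFlow x y k f) (hx : x ∈ S) (hy : y ∉ S)
    (hS : ∀ e u w, G.ends e = s(u, w) → f e * G.dartSign (u, e) < 1 → u ∈ S → w ∈ S) :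
    k = (G.cut S).ncard := by
  classical
  have saturated (e : E) :
      f e * G.potentialDrop (S.indicator 1) e = if e ∈ G.cut S then 1 else 0 := by
    split_ifs with heS
    · obtain ⟨u, hu, w, hw, he⟩ := heS
      have hle : 1 ≤ f e * G.dartSign (u, e) := not_lt.1 fun h => hw (hS e u w he h hu)
      have hfe := abs_le.1 (hf.abs_le_one e)
      rw [potentialDrop_indicator_of_mem_cut he hu hw]
      rcases G.dartSign_eq (u, e) with h | h <;> rw [h] at hle ⊢ <;> omega
    · rw [potentialDrop_indicator_of_notMem_cut heS, mul_zero]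
  rw [← hf.sum_mul_potentialDrop_indicator hx hy, Finset.sum_congr rfl fun e _ => saturated e,
    Finset.sum_boole, Set.ncard_eq_toFinset_card']
  simp

lemma nonpos (hf : G.IsFlow x y k f) (hx : x ∈ S) (hy : y ∉ S)
    (hS : ∀ e u w, G.ends e = s(u, w) → 0 < f e * G.dartSign (u, e) → u ∈ S → w ∈ S) :
    k ≤ 0 := by
  rw [← hf.sum_mul_potentialDrop_indicator hx hy]
  refine Finset.sum_nonpos fun e _ => ?_
  by_cases heS : e ∈ G.cut S
  · obtain ⟨u, hu, w, hw, he⟩ := heS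
    rw [potentialDrop_indicator_of_mem_cut he hu hw]
    exact not_lt.1 fun h => hw (hS e u w he h hu)
  · rw [potentialDrop_indicator_of_notMem_cut heS, mul_zero]

lemma exists_of_le_ncard_cut (k : ℕ) (h : ∀ S : Set V, x ∈ S → y ∉ S → k ≤ (G.cut S).ncard) :
    ∃ f, G.IsFlow x y k f := by
  induction k with
  | zero => exact ⟨0, by simp, by simp⟩
  | succ k ih =>
    obtain ⟨f, hf⟩ := ih fun S hx hy => (Nat.le_succ k).trans (h S hx hy)
    rcases G.exists_isTtrail_or_closed (fun u e => f e * G.dartSign (u, e) < 1) x y with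
      ⟨p, hp, hfp⟩ | ⟨S, hx, hy, hS⟩
    · exact ⟨f + G.trailFlow p, by simpa using hf.add_trailFlow hp hfp⟩
    · have hk := hf.eq_ncard_cut hx hy hS
      have := h S hx hy
      omega

lemma exists_edgeDisjoint_isTtrail (k : ℕ) (hf : G.IsFlow x y k f) :
    ∃ p : Fin k → List (V × E), (∀ i, G.IsTtrail x y (p i)) ∧
      (∀ i j, i ≠ j → EdgeDisjoint (p i) (p j)) ∧ ∀ i, ∀ e ∈ (p i).map Prod.snd, f e ≠ 0 := by
  induction k generalizing f with
  | zero => exact ⟨Fin.elim0, fun i => i.elim0, fun i => i.elim0, fun i => i.elim0⟩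
  | succ k ih =>
    rcases G.exists_isTtrail_or_closed (fun u e => 0 < f e * G.dartSign (u, e)) x y with
      ⟨q, hq, hfq⟩ | ⟨S, hx, hy, hS⟩
    · obtain ⟨p, hp, hdisj, hsupp⟩ := ih (f := f - G.trailFlow q)
        (by simpa using hf.sub_trailFlow hq hfq)
      have notMem_q (i : Fin k) (e : E) (he : e ∈ (p i).map Prod.snd) : e ∉ q.map Prod.snd :=
        fun heq => hsupp i e he (sub_eq_zero.2 (hf.eq_trailFlow hq.2 hfq heq))
      refine ⟨Fin.cons q p, Fin.cases hq hp, ?_, Fin.cases ?_ ?_⟩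
      · refine Fin.cases (Fin.cases (by simp) ?_) fun i => Fin.cases ?_ ?_
        · exact fun j _ e heq hep => notMem_q j e hep heq
        · exact fun _ e hep heq => notMem_q i e hep heq
        · exact fun j hij => hdisj i j (mt (congrArg Fin.succ) hij)
      · intro e he
        obtain ⟨d, hd, rfl⟩ := List.mem_map.1 he
        exact left_ne_zero_of_mul (hfq d hd).ne'
      · intro i e he
        simpa [trailFlow_of_notMem (notMem_q i e he)] using hsupp i e he
    · have := hf.nonpos hx hy hS
      omega

end IsFlow

end Flows

section ConnClass

variable {V E : Type*}

/-- The set of `k`-edge-connected classes, whose cardinality is `G.conk k`. -/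
abbrev ConnClass (G : Multigraph V E) (k : ℕ) : Type _ :=
  Quotient (Relation.EqvGen.setoid (G.KConn k))

/-- The `k`-edge-connected class of a vertex. -/
def connClass (G : Multigraph V E) (k : ℕ) (v : V) : G.ConnClass k := Quotient.mk _ v

end ConnClass

section Menger

variable {V E : Type*} {G : Multigraph V E} {u v : V} {k : ℕ} [Finite E]

theorem kConn_iff_forall_le_ncard_cut :
    G.KConn k u v ↔ ∀ S : Set V, u ∈ S → v ∉ S → k ≤ (G.cut S).ncard := by
  refine ⟨fun h S hu hv => h.le_ncard_cut hu hv, fun h => ?_⟩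
  have := Fintype.ofFinite E
  obtain ⟨f, hf⟩ := IsFlow.exists_of_le_ncard_cut k h
  obtain ⟨p, hp, hdisj, -⟩ := hf.exists_edgeDisjoint_isTtrail
  exact Or.inr ⟨p, hp, hdisj⟩

lemma not_kConn_succ_iff :
    ¬ G.KConn (k + 1) u v ↔ ∃ S : Set V, u ∈ S ∧ v ∉ S ∧ (G.cut S).ncard ≤ k := by
  simp [kConn_iff_forall_le_ncard_cut]

lemma kConn_equivalence (G : Multigraph V E) (k : ℕ) : Equivalence (G.KConn k) where
  refl v := Or.inl rfl
  symm h := kConn_iff_forall_le_ncard_cut.2 fun S hv hu =>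
    G.cut_compl S ▸ h.le_ncard_cut (S := Sᶜ) hu (not_not.2 hv)
  trans {u v w} h h' := kConn_iff_forall_le_ncard_cut.2 fun S hu hw => by
    by_cases hv : v ∈ S
    · exact h'.le_ncard_cut hv hw
    · exact h.le_ncard_cut hu hv

lemma connClass_eq_iff : G.connClass k u = G.connClass k v ↔ G.KConn k u v :=
  Quotient.eq.trans (G.kConn_equivalence k).eqvGen_iff

end Menger

section Gluing

/-- `π` is a quotient map that identifies `x` with `y` and makes no other identification.
If `x = y`, this says that `π` is a bijection. -/
structure IsGluing {α β : Type*} (π : α → β) (x y : α) : Prop where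
  surjective : Function.Surjective π
  eq_iff (u v : α) : π u = π v ↔ u = v ∨ s(u, v) = s(x, y)

namespace IsGluing

variable {α β : Type*} {π : α → β} {x y : α}

lemma apply_eq (hπ : IsGluing π x y) : π x = π y :=
  (hπ.eq_iff x y).2 (Or.inr rfl)

lemma preimage_image (hπ : IsGluing π x y) {S : Set α} (hS : x ∈ S ↔ y ∈ S) :
    π ⁻¹' (π '' S) = S := by
  refine Set.Subset.antisymm (fun u => ?_) (Set.subset_preimage_image π S)
  rintro ⟨v, hv, hvu⟩
  rcases (hπ.eq_iff v u).1 hvu with rfl | h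
  · exact hv
  · rcases Sym2.eq_iff.1 h with ⟨rfl, rfl⟩ | ⟨rfl, rfl⟩ <;> tauto

lemma card_eq (hπ : IsGluing π x y) (hxy : x = y) : Nat.card α = Nat.card β := by
  refine Nat.card_eq_of_bijective π ⟨fun u v huv => ?_, hπ.surjective⟩
  rcases (hπ.eq_iff u v).1 huv with h | h
  · exact h
  · rcases Sym2.eq_iff.1 h with ⟨rfl, rfl⟩ | ⟨rfl, rfl⟩ <;> simp [hxy]

lemma card_eq_add_one [Finite α] (hπ : IsGluing π x y) (hxy : x ≠ y) :
    Nat.card α = Nat.card β + 1 := by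
  classical
  have bijective : Function.Bijective fun v : {v // v ≠ y} => π v := by
    refine ⟨fun u v huv => Subtype.ext ?_, fun b => ?_⟩
    · rcases (hπ.eq_iff u v).1 huv with h | h
      · exact h
      · rcases Sym2.eq_iff.1 h with ⟨-, h⟩ | ⟨h, -⟩
        exacts [absurd h v.2, absurd h u.2]
    · obtain ⟨v, rfl⟩ := hπ.surjective b
      by_cases hv : v = y
      · exact ⟨⟨x, hxy⟩, hv ▸ hπ.apply_eq⟩
      · exact ⟨⟨v, hv⟩, rfl⟩
  rw [← Nat.card_eq_of_bijective _ bijective, ← Finite.card_option,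
    Nat.card_congr (Equiv.optionSubtypeNe y)]

end IsGluing

lemma exists_isGluing {α : Type*} {x y : α} (hxy : x ≠ y) :
    ∃ π : α → {v // v ≠ y}, IsGluing π x y := by
  classical
  refine ⟨fun v => if hv : v = y then ⟨x, hxy⟩ else ⟨v, hv⟩, fun v => ⟨v, dif_neg v.2⟩,
    fun u v => ?_⟩
  rw [Sym2.eq_iff]
  by_cases hu : u = y <;> by_cases hv : v = y <;> grind

end Gluing

section Contraction

variable {V V' E : Type*} {G : Multigraph V E} {π : V → V'} {u v w x y : V} {e : E} {k : ℕ}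

/-- The multigraph obtained by relabelling the vertices along `π`. If `π` glues the ends of an
edge `e`, this is the contraction `G / e`, except that `e` is kept as a loop. -/
def map (π : V → V') (G : Multigraph V E) : Multigraph V' E :=
  ⟨fun e => (G.ends e).map π⟩

lemma ends_map (he : G.ends e = s(u, w)) : (G.map π).ends e = s(π u, π w) := by
  simp [map, he]

lemma cut_map (G : Multigraph V E) (π : V → V') (S : Set V') :
    (G.map π).cut S = G.cut (π ⁻¹' S) := by
  ext e
  induction he : G.ends e with | h u w => ?_
  rw [mem_cut_iff he, mem_cut_iff (ends_map he), Set.mem_preimage, Set.mem_preimage]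

variable [Finite E]

lemma KConn.map (h : G.KConn k u v) (π : V → V') : (G.map π).KConn k (π u) (π v) :=
  kConn_iff_forall_le_ncard_cut.2 fun S hu hv => by
    rw [cut_map]
    exact h.le_ncard_cut hu hv

lemma con_eq_one_iff : G.con = 1 ↔ Nonempty V ∧ ∀ u v, G.KConn 1 u v := by
  refine Nat.card_eq_one_iff_unique.trans ⟨fun ⟨hsub, ⟨c⟩⟩ => ?_, fun ⟨⟨v⟩, h⟩ => ?_⟩
  · exact ⟨⟨c.out⟩, fun u v => connClass_eq_iff.1 (hsub.elim _ _)⟩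
  · exact ⟨⟨Quotient.ind₂ fun u v => connClass_eq_iff.2 (h u v)⟩, ⟨G.connClass 1 v⟩⟩

lemma con_map_eq_one (hπ : Function.Surjective π) (hG : G.con = 1) : (G.map π).con = 1 := by
  obtain ⟨⟨v⟩, hconn⟩ := con_eq_one_iff.1 hG
  exact con_eq_one_iff.2 ⟨⟨π v⟩, hπ.forall₂.2 fun u v => (hconn u v).map π⟩

lemma IsGluing.kConn_map_iff_forall_cut (hπ : IsGluing π x y) :
    (G.map π).KConn k (π u) (π v) ↔
      ∀ S : Set V, (x ∈ S ↔ y ∈ S) → u ∈ S → v ∉ S → k ≤ (G.cut S).ncard := by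
  refine ⟨fun h S hS hu hv => ?_, fun h => kConn_iff_forall_le_ncard_cut.2 fun S hu hv => ?_⟩
  · rw [← hπ.preimage_image hS, ← cut_map]
    refine h.le_ncard_cut (Set.mem_image_of_mem π hu) ?_
    rwa [← Set.mem_preimage, hπ.preimage_image hS]
  · rw [cut_map]
    exact h _ (by simp [hπ.apply_eq]) hu hv

lemma ncard_cut_inter_add_ncard_cut_sdiff_le {S R : Set V} (he : G.ends e = s(x, y))
    (hx : x ∉ R) (hy : y ∉ R) (heS : e ∈ G.cut S) :
    (G.cut (S ∩ R)).ncard + (G.cut (R \ S)).ncard + 2 ≤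
      (G.cut R).ncard + 2 * (G.cut S).ncard := by
  have union_subset : G.cut (S ∩ R) ∪ G.cut (R \ S) ⊆ G.cut R ∪ (G.cut S \ {e}) := by
    intro f
    induction hf : G.ends f with | h a b => ?_
    simp only [Set.mem_union, Set.mem_sdiff, mem_cut_iff hf, Set.mem_inter_iff,
      Set.mem_singleton_iff]
    grind
  have inter_subset : G.cut (S ∩ R) ∩ G.cut (R \ S) ⊆ G.cut S \ {e} := by
    intro f
    induction hf : G.ends f with | h a b => ?_
    simp only [Set.mem_inter_iff, Set.mem_sdiff, mem_cut_iff hf, Set.mem_singleton_iff]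
    grind
  have card_union := (Set.ncard_le_ncard union_subset).trans (Set.ncard_union_le _ _)
  have card_inter := Set.ncard_le_ncard inter_subset
  have := Set.ncard_union_add_ncard_inter (G.cut (S ∩ R)) (G.cut (R \ S))
  have := Set.ncard_sdiff_singleton_add_one heS
  omega

lemma ncard_cut_inter_add_two_le {S R : Set V} (heS : e ∈ G.cut S) (heR : e ∈ G.cut R)
    (heSR : e ∉ G.cut (S ∩ R)) :
    (G.cut (S ∩ R)).ncard + 2 ≤ (G.cut S).ncard + (G.cut R).ncard := by
  have subset : G.cut (S ∩ R) ⊆ (G.cut S \ {e}) ∪ (G.cut R \ {e}) := by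
    intro f hfSR
    have hfe : f ≠ e := fun h => heSR (h ▸ hfSR)
    induction hf : G.ends f with | h a b => ?_
    simp only [Set.mem_union, Set.mem_sdiff, mem_cut_iff hf, Set.mem_singleton_iff,
      Set.mem_inter_iff] at hfSR ⊢
    tauto
  have card_le := (Set.ncard_le_ncard subset).trans (Set.ncard_union_le _ _)
  have := Set.ncard_sdiff_singleton_add_one heS
  have := Set.ncard_sdiff_singleton_add_one heR
  omega

lemma exists_ncard_cut_le_two_of_mem_cut {S : Set V} (he : G.ends e = s(x, y))
    (hux : ¬ G.KConn 3 u x) (hu : u ∈ S) (hv : v ∉ S) (hx : x ∈ S) (hy : y ∉ S)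
    (hS : (G.cut S).ncard ≤ 2) :
    ∃ T : Set V, (x ∈ T ↔ y ∈ T) ∧ u ∈ T ∧ v ∉ T ∧ (G.cut T).ncard ≤ 2 := by
  obtain ⟨R, huR, hxR, hR⟩ := not_kConn_succ_iff.1 hux
  have heS : e ∈ G.cut S := (mem_cut_iff he).2 (by tauto)
  by_cases hyR : y ∈ R
  · have heR : e ∈ G.cut R := (mem_cut_iff he).2 (by tauto)
    have heSR : e ∉ G.cut (S ∩ R) := by simp [mem_cut_iff he, hxR, hy]
    have := ncard_cut_inter_add_two_le heS heR heSR
    exact ⟨S ∩ R, by simp [hxR, hy], ⟨hu, huR⟩, by simp [hv], by omega⟩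
  by_cases hvR : v ∈ R
  · have := ncard_cut_inter_add_ncard_cut_sdiff_le he hxR hyR heS
    obtain hT | hT : (G.cut (S ∩ R)).ncard ≤ 2 ∨ (G.cut (R \ S)).ncard ≤ 2 := by omega
    · exact ⟨S ∩ R, by simp [hxR, hyR], ⟨hu, huR⟩, by simp [hv], hT⟩
    · exact ⟨(R \ S)ᶜ, by simp [hxR, hyR], by simp [hu], by simp [hv, hvR], by rwa [cut_compl]⟩
  · exact ⟨R, by tauto, huR, hvR, hR⟩

lemma IsGluing.not_kConn_three_map (hπ : IsGluing π x y) (he : G.ends e = s(x, y))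
    (hux : ¬ G.KConn 3 u x) (huy : ¬ G.KConn 3 u y) (huv : ¬ G.KConn 3 u v) :
    ¬ (G.map π).KConn 3 (π u) (π v) := by
  suffices ∃ T : Set V, (x ∈ T ↔ y ∈ T) ∧ u ∈ T ∧ v ∉ T ∧ (G.cut T).ncard ≤ 2 by
    obtain ⟨T, hT, hu, hv, hcard⟩ := this
    exact fun h => absurd (hπ.kConn_map_iff_forall_cut.1 h T hT hu hv) (by omega)
  obtain ⟨S, hu, hv, hS⟩ := not_kConn_succ_iff.1 huv
  by_cases hx : x ∈ S <;> by_cases hy : y ∈ S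
  · exact ⟨S, by tauto, hu, hv, hS⟩
  · exact exists_ncard_cut_le_two_of_mem_cut he hux hu hv hx hy hS
  · obtain ⟨T, hT, h⟩ :=
      exists_ncard_cut_le_two_of_mem_cut (he.trans Sym2.eq_swap) huy hu hv hy hx hS
    exact ⟨T, hT.symm, h⟩
  · exact ⟨S, by tauto, hu, hv, hS⟩

lemma IsGluing.kConn_three_map_iff (hπ : IsGluing π x y) (he : G.ends e = s(x, y)) :
    (G.map π).KConn 3 (π u) (π v) ↔ G.KConn 3 u v ∨
      (G.KConn 3 u x ∧ G.KConn 3 v y) ∨ (G.KConn 3 u y ∧ G.KConn 3 v x) := by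
  have hG := G.kConn_equivalence 3
  have hG' := (G.map π).kConn_equivalence 3
  constructor
  · intro h
    by_cases huv : G.KConn 3 u v
    · exact Or.inl huv
    have hu : G.KConn 3 u x ∨ G.KConn 3 u y := by
      by_contra! hu
      exact hπ.not_kConn_three_map he hu.1 hu.2 huv h
    have hv : G.KConn 3 v x ∨ G.KConn 3 v y := by
      by_contra! hv
      exact hπ.not_kConn_three_map he hv.1 hv.2 (fun hvu => huv (hG.symm hvu)) (hG'.symm h)
    have hx (hux : G.KConn 3 u x) : ¬ G.KConn 3 v x := fun hvx =>
      huv (hG.trans hux (hG.symm hvx))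
    have hy (huy : G.KConn 3 u y) : ¬ G.KConn 3 v y := fun hvy =>
      huv (hG.trans huy (hG.symm hvy))
    tauto
  · rintro (h | ⟨hu, hv⟩ | ⟨hu, hv⟩)
    · exact h.map π
    · exact hG'.trans (hu.map π) (hπ.apply_eq ▸ hG'.symm (hv.map π))
    · exact hG'.trans (hu.map π) (hπ.apply_eq ▸ hG'.symm (hv.map π))

lemma IsGluing.exists_isGluing_connClass (hπ : IsGluing π x y) (he : G.ends e = s(x, y)) :
    ∃ φ : G.ConnClass 3 → (G.map π).ConnClass 3,
      IsGluing φ (G.connClass 3 x) (G.connClass 3 y) := by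
  refine ⟨Quotient.map π fun u v h => ?_, ?_, ?_⟩
  · exact Quotient.exact (connClass_eq_iff.2 ((connClass_eq_iff.1 (Quotient.sound h)).map π))
  · exact Quotient.ind (hπ.surjective.forall.2 fun v => ⟨G.connClass 3 v, rfl⟩)
  · refine Quotient.ind₂ fun u v => ?_
    change (G.map π).connClass 3 (π u) = (G.map π).connClass 3 (π v) ↔
      G.connClass 3 u = G.connClass 3 v ∨ s(G.connClass 3 u, G.connClass 3 v) = _
    simp only [Sym2.eq_iff, connClass_eq_iff, hπ.kConn_three_map_iff he]

lemma IsGluing.conk_three_of_kConn (hπ : IsGluing π x y) (he : G.ends e = s(x, y))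
    (hxy : G.KConn 3 x y) : G.conk 3 = (G.map π).conk 3 :=
  have ⟨_, hφ⟩ := hπ.exists_isGluing_connClass he
  hφ.card_eq (connClass_eq_iff.2 hxy)

lemma IsGluing.conk_three_of_not_kConn [Finite V] (hπ : IsGluing π x y)
    (he : G.ends e = s(x, y)) (hxy : ¬ G.KConn 3 x y) : G.conk 3 = (G.map π).conk 3 + 1 :=
  have ⟨_, hφ⟩ := hπ.exists_isGluing_connClass he
  hφ.card_eq_add_one (mt connClass_eq_iff.1 hxy)

end Contraction

section BalancedFunctions

variable {V E A : Type*} [AddCommGroup A] {G : Multigraph V E} {h : V ⊕ E → A} {x y : V} {e : E}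
  {p q : List (V × E)}

/-- The contribution `h(v) + h(e)` of a single vertex-edge pair to `Multigraph.wSum`. -/
def stepHom (A : Type*) [AddCommGroup A] (d : V × E) : (V ⊕ E → A) →+ A :=
  Pi.evalAddMonoidHom (fun _ => A) (Sum.inl d.1) + Pi.evalAddMonoidHom (fun _ => A) (Sum.inr d.2)

lemma stepHom_apply (h : V ⊕ E → A) (d : V × E) :
    stepHom A d h = h (Sum.inl d.1) + h (Sum.inr d.2) := rfl

lemma wSum_singleton (h : V ⊕ E → A) (d : V × E) : wSum h [d] = stepHom A d h :=
  List.sum_singleton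

lemma wSum_append (h : V ⊕ E → A) (p q : List (V × E)) :
    wSum h (p ++ q) = wSum h p + wSum h q := by
  simp [wSum]

lemma wSum_eq_of_perm (h : V ⊕ E → A) (hpq : p.Perm q) : wSum h p = wSum h q :=
  (hpq.map _).sum_eq

lemma exists_append_of_not_nodup_map {α β : Type*} {f : α → β} {l : List α}
    (hl : ¬ (l.map f).Nodup) :
    ∃ a b l₁ l₂ l₃, l = l₁ ++ a :: (l₂ ++ b :: l₃) ∧ f a = f b := by
  induction l with
  | nil => simp at hl
  | cons c l ih =>
    by_cases hc : f c ∈ l.map f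
    · obtain ⟨b, hb, hbc⟩ := List.mem_map.1 hc
      obtain ⟨l₂, l₃, rfl⟩ := List.append_of_mem hb
      exact ⟨c, b, [], l₂, l₃, rfl, hbc.symm⟩
    · obtain ⟨a, b, l₁, l₂, l₃, rfl, hab⟩ := ih fun h => hl (List.nodup_cons.2 ⟨hc, h⟩)
      exact ⟨a, b, c :: l₁, l₂, l₃, rfl, hab⟩

lemma balancedW_of_forall_isCycle (hcycle : ∀ x p, G.IsCycle x p → wSum h p = 0) :
    G.BalancedW h := by
  intro x p hp
  induction hn : p.length using Nat.strong_induction_on generalizing x p with | _ n ih => ?_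
  by_cases hnodup : (p.map Prod.fst).Nodup
  · exact hcycle x p ⟨hp, hnodup⟩
  obtain ⟨⟨v, e₁⟩, ⟨w, e₂⟩, p₁, p₂, p₃, rfl, rfl : v = w⟩ :=
    exists_append_of_not_nodup_map hnodup
  obtain ⟨hp₁, u, he₁, hp₂₃⟩ := isChain_append_cons.1 hp.1
  obtain ⟨hp₂, hp₃⟩ := isChain_append_cons.1 hp₂₃
  have inner : G.IsTtrail v v ((v, e₁) :: p₂) :=
    ⟨⟨rfl, u, he₁, hp₂⟩, hp.2.sublist (by simp)⟩
  have outer : G.IsTtrail x x (p₁ ++ (v, e₂) :: p₃) :=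
    ⟨isChain_append_cons.2 ⟨hp₁, hp₃⟩, hp.2.sublist (by simp)⟩
  have inner_zero := ih _ (by grind) v _ inner rfl
  have outer_zero := ih _ (by grind) x _ outer rfl
  rw [wSum_append] at outer_zero
  rw [wSum_append, ← List.cons_append, wSum_append, inner_zero, zero_add, outer_zero]

lemma BalancedW.stepHom_add_stepHom_eq_zero (hh : G.BalancedW h) (he : G.ends e = s(x, y))
    (hxy : G.KConn 3 x y) : stepHom A (x, e) h + stepHom A (y, e) h = 0 := by
  rcases hxy with rfl | ⟨p, hp, hdisj⟩
  · have loop := hh x _ (isTtrail_singleton he)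
    rw [wSum_singleton] at loop
    rw [loop, add_zero]
  obtain ⟨i, j, hij, hi, hj⟩ :
      ∃ i j, i ≠ j ∧ e ∉ (p i).map Prod.snd ∧ e ∉ (p j).map Prod.snd := by
    by_cases h₀ : e ∈ (p 0).map Prod.snd
    · exact ⟨1, 2, by decide, hdisj 0 1 (by decide) e h₀, hdisj 0 2 (by decide) e h₀⟩
    by_cases h₁ : e ∈ (p 1).map Prod.snd
    · exact ⟨0, 2, by decide, h₀, hdisj 1 2 (by decide) e h₁⟩
    · exact ⟨0, 1, by decide, h₀, h₁⟩
  obtain ⟨q, hq, hqp⟩ := (hp j).exists_reverse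
  have hxx := hh x _ ((hp i).append hq fun f hf hfq => hdisj i j hij f hf ((hqp f).1 hfq))
  have hxe := hh x _ (.cons he hq (mt (hqp e).1 hj))
  have hye := hh x _ ((hp i).append_singleton (he.trans Sym2.eq_swap) hi)
  rw [wSum_append] at hxx hye
  rw [wSum_cons, ← stepHom_apply] at hxe
  rw [wSum_singleton] at hye
  calc stepHom A (x, e) h + stepHom A (y, e) h
      = stepHom A (x, e) h + wSum h q + (wSum h (p i) + stepHom A (y, e) h)
          - (wSum h (p i) + wSum h q) := by abel
    _ = 0 := by rw [hxe, hye, hxx, add_zero, sub_zero]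

end BalancedFunctions

section BalancedContraction

variable {V V' E A : Type*} [AddCommGroup A] {G : Multigraph V E} {π : V → V'} {x y : V}
  {X Y : V'} {e : E} {h : V' ⊕ E → A}

lemma exists_ends_of_ends_map (he : (G.map π).ends e = s(X, Y)) :
    ∃ u v, G.ends e = s(u, v) ∧ π u = X ∧ π v = Y := by
  induction hG : G.ends e with | h u v => ?_
  rcases Sym2.eq_iff.1 ((ends_map hG).symm.trans he) with ⟨hu, hv⟩ | ⟨hu, hv⟩
  · exact ⟨u, v, rfl, hu, hv⟩
  · exact ⟨v, u, Sym2.eq_swap, hv, hu⟩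

lemma wSum_comp_map (h : V' ⊕ E → A) (π : V → V') (p : List (V × E)) :
    wSum (h ∘ Sum.map π id) p = wSum h (p.map (Prod.map π id)) := by
  simp [wSum, Function.comp_def]

lemma map_snd_map_prodMap (π : V → V') (p : List (V × E)) :
    (p.map (Prod.map π id)).map Prod.snd = p.map Prod.snd := by
  simp

lemma IsChain.map {p : List (V × E)} (hp : G.IsChain x y p) (π : V → V') :
    (G.map π).IsChain (π x) (π y) (p.map (Prod.map π id)) := by
  induction p generalizing x with
  | nil => exact congrArg π hp
  | cons d p ih =>
    obtain ⟨rfl, w, he, hp⟩ := hp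
    exact ⟨rfl, π w, ends_map he, ih hp⟩

lemma BalancedW.comp_map (hh : (G.map π).BalancedW h) : G.BalancedW (h ∘ Sum.map π id) :=
  fun x p hp => by
    rw [wSum_comp_map]
    exact hh (π x) _ ⟨hp.1.map π, by rw [map_snd_map_prodMap]; exact hp.2⟩

lemma IsChain.exists_lift {p : List (V' × E)} (hp : (G.map π).IsChain (π x) Y p)
    (hfiber : ∀ X ∈ p.map Prod.fst, ∀ u v, π u = X → π v = X → u = v) :
    ∃ y q, G.IsChain x y q ∧ π y = Y ∧ q.map (Prod.map π id) = p := by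
  induction p generalizing x with
  | nil => exact ⟨x, [], rfl, hp, rfl⟩
  | cons d p ih =>
    obtain ⟨hd, W, hends, hp⟩ := hp
    obtain ⟨u, w, he, hu, rfl⟩ := exists_ends_of_ends_map hends
    obtain rfl : u = x := hfiber d.1 (by simp) u x (hu.trans hd.symm) hd.symm
    obtain ⟨y, q, hq, hy, rfl⟩ := ih hp fun X hX => hfiber X (List.mem_cons_of_mem _ hX)
    exact ⟨y, (u, d.2) :: q, ⟨rfl, w, he, hq⟩, hy, by simp [← hd, Prod.map]⟩

lemma IsChain.fst_mem_ends {p : List (V × E)} (hp : G.IsChain x y p) {d : V × E} (hd : d ∈ p) :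
    d.1 ∈ G.ends d.2 := by
  obtain ⟨p₁, p₂, rfl⟩ := List.append_of_mem hd
  obtain ⟨-, w, he, -⟩ := isChain_append_cons.1 hp
  rw [he]
  exact Sym2.mem_mk_left _ _

lemma IsCycle.exists_rotate {p : List (V × E)} (hp : G.IsCycle x p) (hne : p ≠ []) (z : V) :
    ∃ d q, p.Perm (d :: q) ∧ G.IsTtrail d.1 d.1 (d :: q) ∧ z ∉ q.map Prod.fst := by
  by_cases hz : z ∈ p.map Prod.fst
  · obtain ⟨⟨z, e⟩, hd, rfl⟩ := List.mem_map.1 hz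
    obtain ⟨p₁, p₂, rfl⟩ := List.append_of_mem hd
    have hperm : (p₁ ++ (z, e) :: p₂).Perm ((z, e) :: (p₂ ++ p₁)) := List.perm_append_comm
    exact ⟨(z, e), p₂ ++ p₁, hperm, hp.1.rotate,
      (List.nodup_cons.1 ((hperm.map Prod.fst).nodup_iff.1 hp.2)).1⟩
  · obtain ⟨d, q, rfl⟩ := List.exists_cons_of_ne_nil hne
    have hd : d.1 = x := hp.1.1.1
    exact ⟨d, q, .refl _, hd ▸ hp.1, fun h => hz (List.mem_cons_of_mem _ h)⟩

lemma IsGluing.wSum_eq_zero_of_notMem (hπ : IsGluing π x y) (he : G.ends e = s(x, y))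
    (hh : G.BalancedW (h ∘ Sum.map π id)) (hstep : stepHom A (π x, e) h = 0) {d : V' × E}
    {p : List (V' × E)} (hp : (G.map π).IsTtrail d.1 d.1 (d :: p)) (hx : π x ∉ p.map Prod.fst)
    (hep : e ∉ (d :: p).map Prod.snd) : wSum h (d :: p) = 0 := by
  obtain ⟨⟨-, W, hends, hp⟩, hnodup⟩ := hp
  obtain ⟨a, w, hd, ha, rfl⟩ := exists_ends_of_ends_map hends
  have hfiber : ∀ X ∈ p.map Prod.fst, ∀ u v, π u = X → π v = X → u = v := by
    rintro X hX u v rfl huv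
    rcases (hπ.eq_iff u v).1 huv.symm with rfl | h
    · rfl
    · rcases Sym2.eq_iff.1 h with ⟨rfl, rfl⟩ | ⟨rfl, rfl⟩
      exacts [absurd hX hx, absurd (hπ.apply_eq ▸ hX) hx]
  obtain ⟨b, q, hq, hb, rfl⟩ := hp.exists_lift hfiber
  have hmap : d :: q.map (Prod.map π id) = ((a, d.2) :: q).map (Prod.map π id) := by
    simp [ha, Prod.map]
  rw [hmap, map_snd_map_prodMap] at hnodup hep
  rw [hmap, ← wSum_comp_map]
  have lift : G.IsTtrail a b ((a, d.2) :: q) := ⟨⟨rfl, w, hd, hq⟩, hnodup⟩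
  rcases (hπ.eq_iff a b).1 (ha.trans hb.symm) with rfl | hab
  · exact hh _ _ lift
  · have hclosed := hh a _ (lift.append_singleton ((he.trans hab.symm).trans Sym2.eq_swap) hep)
    have hbx : π b = π x := by
      rcases Sym2.eq_iff.1 hab with ⟨-, rfl⟩ | ⟨-, rfl⟩
      exacts [hπ.apply_eq.symm, rfl]
    have hbe : stepHom A (b, e) (h ∘ Sum.map π id) = stepHom A (π b, e) h := rfl
    rwa [wSum_append, wSum_singleton, hbe, hbx, hstep, add_zero] at hclosed

lemma IsGluing.balancedW_map_iff (hπ : IsGluing π x y) (he : G.ends e = s(x, y)) :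
    (G.map π).BalancedW h ↔ G.BalancedW (h ∘ Sum.map π id) ∧ stepHom A (π x, e) h = 0 := by
  have he' : (G.map π).ends e = s(π x, π x) := by rw [ends_map he, ← hπ.apply_eq]
  refine ⟨fun hh => ⟨hh.comp_map, ?_⟩, fun ⟨hh, hstep⟩ => balancedW_of_forall_isCycle ?_⟩
  · rw [← wSum_singleton]
    exact hh _ _ (isTtrail_singleton he')
  intro X p hp
  rcases eq_or_ne p [] with rfl | hne
  · rfl
  obtain ⟨d, q, hperm, hdq, hxq⟩ := hp.exists_rotate hne (π x)
  rw [wSum_eq_of_perm h hperm]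
  by_cases hed : e ∈ (d :: q).map Prod.snd
  · obtain ⟨⟨Y, e⟩, hYe, rfl⟩ := List.mem_map.1 hed
    have hY : Y = π x := by simpa [he'] using hdq.1.fst_mem_ends hYe
    obtain rfl : (Y, e) = d := (List.mem_cons.1 hYe).resolve_right fun hYq =>
      hxq (hY ▸ List.mem_map_of_mem hYq)
    subst hY
    obtain ⟨⟨-, W, hW, hq⟩, -⟩ := hdq
    obtain rfl : π x = W := Sym2.congr_right.1 (he'.symm.trans hW)
    cases q with
    | nil => rwa [wSum_singleton]
    | cons c q => exact absurd (by simp [show c.1 = π x from hq.1]) hxq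
  · exact hπ.wSum_eq_zero_of_notMem he hh hstep hdq hxq hed

end BalancedContraction

section Gauge

variable {V E A : Type*} [AddCommGroup A] {G : Multigraph V E} {x y : V} {e : E}
  {p : List (V × E)}

/-- The balanced function of a potential `q`: it is `2 q(v)` on a vertex `v` and
`-(q(u) + q(w))` on an edge with ends `u` and `w`, so that the sums along trails telescope. -/
def gauge (G : Multigraph V E) (A : Type*) [AddCommGroup A] : (V → A) →+ (V ⊕ E → A) where
  toFun q := Sum.elim (fun v => q v + q v) fun e => -((G.ends e).map q).add
  map_zero' := by
    ext (v | e)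
    · simp
    · induction he : G.ends e with | h u w => simp [he]
  map_add' q q' := by
    ext (v | e)
    · simp only [Sum.elim_inl, Pi.add_apply]
      abel
    · induction he : G.ends e with | h u w => ?_
      simp only [he, Sum.elim_inr, Pi.add_apply, Sym2.map_mk, Sym2.add_mk]
      abel

lemma stepHom_gauge (he : G.ends e = s(x, y)) (q : V → A) :
    stepHom A (x, e) (G.gauge A q) = q x - q y := by
  simp only [stepHom_apply, gauge, AddMonoidHom.coe_mk, ZeroHom.coe_mk, Sum.elim_inl, Sum.elim_inr,
    he, Sym2.map_mk, Sym2.add_mk]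
  abel

lemma wSum_gauge (hp : G.IsChain x y p) (q : V → A) : wSum (G.gauge A q) p = q x - q y := by
  induction p generalizing x with
  | nil => cases hp; simp [wSum]
  | cons d p ih =>
    obtain ⟨rfl, w, he, hp⟩ := hp
    rw [wSum_cons, ← stepHom_apply, stepHom_gauge he, ih hp, sub_add_sub_cancel]

lemma balancedW_gauge (G : Multigraph V E) (q : V → A) : G.BalancedW (G.gauge A q) :=
  fun x p hp => by rw [wSum_gauge hp.1, sub_self]

end Gauge

section CutShift

variable {V E A : Type*} [AddCommGroup A] {G : Multigraph V E} {S : Set V} {x y : V} {e f : E}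
  {p : List (V × E)}

open Classical in
/-- The function that is `0` on `S` and `δ` outside `S`, with values on the edges that cancel it
away from the cut of `S`. It is balanced if that cut consists of `e` and at most one other edge. -/
noncomputable def cutShift (G : Multigraph V E) (A : Type*) [AddCommGroup A] (S : Set V) (e : E) :
    A →+ (V ⊕ E → A) where
  toFun δ := Sum.elim (fun v => if v ∈ S then 0 else δ)
    fun f => if f = e ∨ ∀ v ∈ G.ends f, v ∈ S then 0 else -δ
  map_zero' := by
    ext (v | f) <;> simp
  map_add' δ δ' := by
    ext (v | f)
    · by_cases hv : v ∈ S <;> simp [hv]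
    · by_cases hf : f = e ∨ ∀ v ∈ G.ends f, v ∈ S <;> simp [hf, add_comm]

lemma cutShift_inl_of_mem (hx : x ∈ S) (δ : A) : G.cutShift A S e δ (Sum.inl x) = 0 := by
  simp [cutShift, hx]

lemma cutShift_inl_of_notMem (hx : x ∉ S) (δ : A) : G.cutShift A S e δ (Sum.inl x) = δ := by
  simp [cutShift, hx]

lemma cutShift_inr_self (G : Multigraph V E) (S : Set V) (e : E) (δ : A) :
    G.cutShift A S e δ (Sum.inr e) = 0 := by
  simp [cutShift]

lemma cutShift_inr_of_mem_cut (hf : f ∈ G.cut S) (hfe : f ≠ e) (δ : A) :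
    G.cutShift A S e δ (Sum.inr f) = -δ := by
  obtain ⟨u, -, w, hw, hf⟩ := hf
  simp [cutShift, hfe, hf, hw]

lemma stepHom_cutShift_of_mem (hx : x ∈ S) (δ : A) :
    stepHom A (x, e) (G.cutShift A S e δ) = 0 := by
  rw [stepHom_apply, cutShift_inl_of_mem hx, cutShift_inr_self, add_zero]

lemma stepHom_cutShift_of_notMem (hx : x ∉ S) (δ : A) :
    stepHom A (x, e) (G.cutShift A S e δ) = δ := by
  rw [stepHom_apply, cutShift_inl_of_notMem hx, cutShift_inr_self, add_zero]

lemma stepHom_cutShift_of_notMem_cut (heS : e ∈ G.cut S) (hf : G.ends f = s(x, y))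
    (hfS : f ∉ G.cut S) (δ : A) : stepHom A (x, f) (G.cutShift A S e δ) = 0 := by
  have hfe : f ≠ e := fun h => hfS (h ▸ heS)
  rw [mem_cut_iff hf] at hfS
  by_cases hx : x ∈ S <;> simp_all [stepHom_apply, cutShift]

lemma wSum_cutShift_of_disjoint_cut (heS : e ∈ G.cut S) (hp : G.IsChain x y p)
    (hpS : ∀ f ∈ p.map Prod.snd, f ∉ G.cut S) (δ : A) :
    wSum (G.cutShift A S e δ) p = 0 := by
  induction p generalizing x with
  | nil => rfl
  | cons d p ih =>
    obtain ⟨rfl, w, hd, hp⟩ := hp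
    obtain ⟨hdS, hpS⟩ := List.forall_mem_cons.1 hpS
    rw [wSum_cons, ← stepHom_apply, stepHom_cutShift_of_notMem_cut heS hd hdS, ih hp hpS, add_zero]

lemma cutShift_add_cutShift_of_mem_iff (hxy : x ∈ S ↔ y ∉ S) (δ : A) :
    G.cutShift A S e δ (Sum.inl x) + G.cutShift A S e δ (Sum.inl y) = δ := by
  by_cases hx : x ∈ S
  · rw [cutShift_inl_of_mem hx, cutShift_inl_of_notMem (hxy.1 hx), zero_add]
  · rw [cutShift_inl_of_notMem hx, cutShift_inl_of_mem (by tauto), add_zero]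

variable [Finite E]

lemma eq_or_eq_of_mem_cut {a b c : E} (ha : a ∈ G.cut S) (hb : b ∈ G.cut S) (hc : c ∈ G.cut S)
    (hab : a ≠ b) (hS : (G.cut S).ncard ≤ 2) : c = a ∨ c = b := by
  have hcut : {a, b} = G.cut S :=
    Set.eq_of_subset_of_ncard_le (Set.insert_subset ha (Set.singleton_subset_iff.2 hb))
      (by rwa [Set.ncard_pair hab])
  simpa [← hcut] using hc

lemma wSum_cutShift_cons_of_mem_cut {v : V} (heS : e ∈ G.cut S) (hS : (G.cut S).ncard ≤ 2)
    (hp : G.IsTtrail v v ((v, f) :: p)) (hfS : f ∈ G.cut S) (δ : A) :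
    wSum (G.cutShift A S e δ) ((v, f) :: p) = 0 := by
  obtain ⟨⟨-, w, hf, hp⟩, hnodup⟩ := hp
  have hvw := (mem_cut_iff hf).1 hfS
  obtain ⟨g, hgp, hgS⟩ := hp.exists_mem_cut (S := S) (by tauto)
  obtain ⟨⟨v', g⟩, hvg, rfl⟩ := List.mem_map.1 hgp
  obtain ⟨p₁, p₂, rfl⟩ := List.append_of_mem hvg
  obtain ⟨hp₁, w', hg, hp₂⟩ := isChain_append_cons.1 hp
  simp only [List.map_cons, List.map_append, List.nodup_cons, List.nodup_middle,
    List.mem_append, List.mem_cons] at hnodup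
  have hfg : f ≠ g := fun h => hnodup.1 (Or.inr (Or.inl h))
  have hp₁S : ∀ c ∈ p₁.map Prod.snd, c ∉ G.cut S := fun c hc hcS => by
    rcases eq_or_eq_of_mem_cut hfS hgS hcS hfg hS with rfl | rfl <;> tauto
  have hp₂S : ∀ c ∈ p₂.map Prod.snd, c ∉ G.cut S := fun c hc hcS => by
    rcases eq_or_eq_of_mem_cut hfS hgS hcS hfg hS with rfl | rfl <;> tauto
  have hvv' : v ∈ S ↔ v' ∉ S := by
    by_contra hside
    obtain ⟨c, hc, hcS⟩ := hp₁.exists_mem_cut (S := S) (by tauto)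
    exact hp₁S c hc hcS
  have hfg_sum : G.cutShift A S e δ (Sum.inr f) + G.cutShift A S e δ (Sum.inr g) = -δ := by
    rcases eq_or_eq_of_mem_cut hfS hgS heS hfg hS with rfl | rfl
    · rw [cutShift_inr_self, cutShift_inr_of_mem_cut hgS hfg.symm, zero_add]
    · rw [cutShift_inr_self, cutShift_inr_of_mem_cut hfS hfg, add_zero]
  rw [wSum_cons, wSum_append, wSum_cons, wSum_cutShift_of_disjoint_cut heS hp₁ hp₁S,
    wSum_cutShift_of_disjoint_cut heS hp₂ hp₂S, zero_add, add_zero, add_add_add_comm,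
    cutShift_add_cutShift_of_mem_iff hvv', hfg_sum, add_neg_cancel]

lemma balancedW_cutShift (heS : e ∈ G.cut S) (hS : (G.cut S).ncard ≤ 2) (δ : A) :
    G.BalancedW (G.cutShift A S e δ) := by
  intro x p hp
  by_cases hpS : ∀ f ∈ p.map Prod.snd, f ∉ G.cut S
  · exact wSum_cutShift_of_disjoint_cut heS hp.1 hpS δ
  push Not at hpS
  obtain ⟨f, hfp, hfS⟩ := hpS
  obtain ⟨⟨v, f⟩, hvf, rfl⟩ := List.mem_map.1 hfp
  obtain ⟨p₁, p₂, rfl⟩ := List.append_of_mem hvf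
  rw [wSum_eq_of_perm _ List.perm_append_comm]
  exact wSum_cutShift_cons_of_mem_cut heS hS hp.rotate hfS δ

end CutShift

section Splitting

variable {V V' E A : Type*} [AddCommGroup A] {G : Multigraph V E}
  {π : V → V'} {x y : V} {e : E}

/-- Pulling back balanced functions along `π`, which is injective if `π` is surjective. -/
def pullback (G : Multigraph V E) (A : Type*) [AddCommGroup A] (π : V → V') :
    (G.map π).Wgroup A →+ G.Wgroup A where
  toFun h := ⟨h.1 ∘ Sum.map π id, h.2.comp_map⟩
  map_zero' := rfl
  map_add' _ _ := rfl

lemma pullback_injective (G : Multigraph V E) (hπ : Function.Surjective π) :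
    Function.Injective (G.pullback A π) := fun h h' hh => by
  have surjective : Function.Surjective (Sum.map π (id : E → E)) :=
    Sum.map_surjective.2 ⟨hπ, Function.surjective_id⟩
  exact Subtype.ext (surjective.injective_comp_right (congrArg Subtype.val hh))

/-- The values of a balanced function on the two steps along an edge `e` with ends `x`, `y`. -/
def stepPair (G : Multigraph V E) (A : Type*) [AddCommGroup A] (x y : V) (e : E) :
    G.Wgroup A →+ A × A :=
  ((stepHom A (x, e)).prod (stepHom A (y, e))).comp (G.Wgroup A).subtype

lemma IsGluing.exists_comp_eq (hπ : IsGluing π x y) {h : V ⊕ E → A}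
    (hxy : h (Sum.inl x) = h (Sum.inl y)) : ∃ h' : V' ⊕ E → A, h' ∘ Sum.map π id = h := by
  have factors : h.FactorsThrough (Sum.map π id) := by
    rintro (u | f) (v | g) huv
    · rcases (hπ.eq_iff u v).1 (Sum.inl_injective huv) with rfl | huv
      · rfl
      · rcases Sym2.eq_iff.1 huv with ⟨rfl, rfl⟩ | ⟨rfl, rfl⟩
        exacts [hxy, hxy.symm]
    · simp at huv
    · simp at huv
    · exact congrArg (h ∘ Sum.inr) (Sum.inr_injective huv)
  obtain ⟨h', hh'⟩ := (Function.factorsThrough_iff h).1 factors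
  exact ⟨h', hh'.symm⟩

lemma IsGluing.exact_pullback_stepPair (hπ : IsGluing π x y) (he : G.ends e = s(x, y)) :
    Function.Exact (G.pullback A π) (G.stepPair A x y e) := by
  intro h
  constructor
  · intro hh
    obtain ⟨hx, hy⟩ : stepHom A (x, e) h.1 = 0 ∧ stepHom A (y, e) h.1 = 0 := Prod.ext_iff.1 hh
    obtain ⟨h', hh'⟩ := hπ.exists_comp_eq (add_right_cancel (hx.trans hy.symm))
    have balanced : (G.map π).BalancedW h' :=
      (hπ.balancedW_map_iff he).2 ⟨hh' ▸ h.2, (congrArg (stepHom A (x, e)) hh').trans hx⟩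
    exact ⟨⟨h', balanced⟩, Subtype.ext hh'⟩
  · rintro ⟨h', rfl⟩
    have hx := ((hπ.balancedW_map_iff he).1 h'.2).2
    exact Prod.ext hx (by rw [hπ.apply_eq] at hx; exact hx)

lemma nonempty_addEquiv_prod_of_exact {M N P : Type*} [AddCommGroup M] [AddCommGroup N]
    [AddCommGroup P] {i : M →+ N} {φ : N →+ P} (hi : Function.Injective i)
    (hiφ : Function.Exact i φ) (s : P →+ N) (hs : Function.RightInverse s φ) :
    Nonempty (N ≃+ M × P) := by
  have int_exact : Function.Exact i.toIntLinearMap φ.toIntLinearMap := hiφ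
  exact ⟨(int_exact.splitSurjectiveEquiv hi ⟨s.toIntLinearMap, LinearMap.ext hs⟩).1.toAddEquiv⟩

/-- The balanced functions `Multigraph.gauge`, bundled. -/
def gaugeHom (G : Multigraph V E) (A : Type*) [AddCommGroup A] : (V → A) →+ G.Wgroup A :=
  (G.gauge A).codRestrict (G.Wgroup A) G.balancedW_gauge

lemma stepPair_gaugeHom (he : G.ends e = s(x, y)) (q : V → A) :
    G.stepPair A x y e (G.gaugeHom A q) = (q x - q y, q y - q x) :=
  Prod.ext (stepHom_gauge he q) (stepHom_gauge (he.trans Sym2.eq_swap) q)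

lemma stepPair_eq_zero_iff_of_kConn (he : G.ends e = s(x, y)) (hxy : G.KConn 3 x y)
    (h : G.Wgroup A) : G.stepPair A x y e h = 0 ↔ (G.stepPair A x y e h).1 = 0 := by
  have hsum : (G.stepPair A x y e h).1 + (G.stepPair A x y e h).2 = 0 :=
    h.2.stepHom_add_stepHom_eq_zero he hxy
  rw [Prod.ext_iff, Prod.fst_zero, Prod.snd_zero, and_iff_left_of_imp]
  intro h₁
  rwa [h₁, zero_add] at hsum

lemma IsGluing.nonempty_wgroup_addEquiv_of_kConn (hπ : IsGluing π x y)
    (he : G.ends e = s(x, y)) (hne : x ≠ y) (hxy : G.KConn 3 x y) :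
    Nonempty (G.Wgroup A ≃+ (G.map π).Wgroup A × A) := by
  classical
  refine nonempty_addEquiv_prod_of_exact (G.pullback_injective hπ.surjective)
    (φ := (AddMonoidHom.fst A A).comp (G.stepPair A x y e)) (fun h => ?_)
    ((G.gaugeHom A).comp (AddMonoidHom.single (fun _ => A) x)) fun a => ?_
  · rw [← hπ.exact_pullback_stepPair he h, stepPair_eq_zero_iff_of_kConn he hxy]
    rfl
  · simp [stepPair_gaugeHom he, hne.symm]

lemma IsGluing.nonempty_wgroup_addEquiv_of_not_kConn [Finite E] (hπ : IsGluing π x y)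
    (he : G.ends e = s(x, y)) (hxy : ¬ G.KConn 3 x y) :
    Nonempty (G.Wgroup A ≃+ (G.map π).Wgroup A × (A × A)) := by
  classical
  obtain ⟨S, hx, hy, hS⟩ := not_kConn_succ_iff.1 hxy
  have heS : e ∈ G.cut S := (mem_cut_iff he).2 (by tauto)
  have hne : x ≠ y := fun h => hy (h ▸ hx)
  let gaugeAt : A →+ G.Wgroup A := (G.gaugeHom A).comp (AddMonoidHom.single (fun _ => A) x)
  let shift : A →+ G.Wgroup A :=
    (G.cutShift A S e).codRestrict (G.Wgroup A) (balancedW_cutShift heS hS)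
  have stepPair_gaugeAt (a : A) : G.stepPair A x y e (gaugeAt a) = (a, -a) := by
    simp [gaugeAt, stepPair_gaugeHom he, hne.symm]
  have stepPair_shift (a : A) : G.stepPair A x y e (shift a) = (0, a) :=
    Prod.ext (stepHom_cutShift_of_mem hx a) (stepHom_cutShift_of_notMem hy a)
  refine nonempty_addEquiv_prod_of_exact (G.pullback_injective hπ.surjective)
    (hπ.exact_pullback_stepPair he)
    (gaugeAt.coprod shift + shift.comp (AddMonoidHom.fst A A)) fun ⟨a, b⟩ => ?_
  simp [stepPair_gaugeAt, stepPair_shift]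

end Splitting

section Counting

variable {V E : Type*} {G : Multigraph V E}

lemma exists_ends_ne_of_kConn_one [Finite E] {u v : V} (huv : u ≠ v) (h : G.KConn 1 u v) :
    ∃ e x y, G.ends e = s(x, y) ∧ x ≠ y := by
  have hcut : 1 ≤ (G.cut {u}).ncard := h.le_ncard_cut rfl huv.symm
  obtain ⟨e, x, hx, y, hy, he⟩ := (Set.ncard_pos).1 hcut
  exact ⟨e, x, y, he, fun hxy => hy (hxy ▸ hx)⟩

lemma nonempty_wgroup_addEquiv_of_unique [Unique V] (G : Multigraph V E) (A : Type*)
    [AddCommGroup A] : Nonempty (G.Wgroup A ≃+ A) := by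
  have step_eq_zero (h : G.Wgroup A) (e : E) : h.1 (Sum.inl default) + h.1 (Sum.inr e) = 0 := by
    have loop : G.ends e = s(default, default) := Subsingleton.elim _ _
    rw [← stepHom_apply h.1 (default, e), ← wSum_singleton]
    exact h.2 default _ (isTtrail_singleton loop)
  let eval : G.Wgroup A →+ A :=
    (Pi.evalAddMonoidHom (fun _ => A) (Sum.inl default)).comp (G.Wgroup A).subtype
  refine ⟨AddEquiv.ofBijective eval ⟨(injective_iff_map_eq_zero eval).2 fun h hh => ?_,
    fun a => ⟨⟨Sum.elim (fun _ => a) fun _ => -a, fun x p _ => by simp [wSum]⟩, rfl⟩⟩⟩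
  have h_inl : h.1 (Sum.inl default) = 0 := hh
  refine Subtype.ext (funext ?_)
  rintro (v | e)
  · rwa [Subsingleton.elim v default]
  · simpa [h_inl] using step_eq_zero h e

lemma IsGluing.exists_wgroup_addEquiv [Finite V] [Finite E] {V' : Type*} {π : V → V'} {x y : V}
    {e : E} (hπ : IsGluing π x y) (he : G.ends e = s(x, y)) (hne : x ≠ y) (A : Type*)
    [AddCommGroup A] :
    ∃ k, Nat.card V + G.conk 3 = Nat.card V' + (G.map π).conk 3 + k ∧
      Nonempty (G.Wgroup A ≃+ (G.map π).Wgroup A × (Fin k → A)) := by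
  have card_V := hπ.card_eq_add_one hne
  by_cases hxy : G.KConn 3 x y
  · obtain ⟨φ⟩ := hπ.nonempty_wgroup_addEquiv_of_kConn (A := A) he hne hxy
    have conk_eq := hπ.conk_three_of_kConn he hxy
    exact ⟨1, by omega, ⟨φ.trans (.prodCongr (.refl _)
      (LinearEquiv.funUnique (Fin 1) ℤ A).symm.toAddEquiv)⟩⟩
  · obtain ⟨φ⟩ := hπ.nonempty_wgroup_addEquiv_of_not_kConn (A := A) he hxy
    have conk_eq := hπ.conk_three_of_not_kConn he hxy
    exact ⟨2, by omega, ⟨φ.trans (.prodCongr (.refl _)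
      (LinearEquiv.finTwoArrow ℤ A).symm.toAddEquiv)⟩⟩

lemma nonempty_prod_addEquiv_fin (m n : ℕ) (A : Type*) [AddCommGroup A] :
    Nonempty ((Fin m → A) × (Fin n → A) ≃+ (Fin (m + n) → A)) :=
  ⟨((LinearEquiv.sumArrowLequivProdArrow (Fin m) (Fin n) ℤ A).symm.trans
    (LinearEquiv.funCongrLeft ℤ A finSumFinEquiv.symm)).toAddEquiv⟩

theorem stmt19_general {V E : Type*} [Finite V] [Finite E] (G : Multigraph V E)
    (hconn : G.con = 1) (A : Type*) [AddCommGroup A] :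
    Nonempty (G.Wgroup A ≃+ (Fin (Nat.card V + G.conk 3 - 1) → A)) := by
  obtain ⟨⟨v₀⟩, kConn_one⟩ := con_eq_one_iff.1 hconn
  by_cases hedge : ∃ e x y, G.ends e = s(x, y) ∧ x ≠ y
  · obtain ⟨e, x, y, he, hne⟩ := hedge
    obtain ⟨π, hπ⟩ := exists_isGluing hne
    have card_V := hπ.card_eq_add_one hne
    have : Nonempty {v // v ≠ y} := ⟨π x⟩
    have card_pos : 0 < Nat.card {v // v ≠ y} := Nat.card_pos
    obtain ⟨k, hk, ⟨φ⟩⟩ := hπ.exists_wgroup_addEquiv he hne A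
    obtain ⟨ψ⟩ := stmt19_general (G.map π) (con_map_eq_one hπ.surjective hconn) A
    obtain ⟨χ⟩ := nonempty_prod_addEquiv_fin (Nat.card {v // v ≠ y} + (G.map π).conk 3 - 1) k A
    rw [show Nat.card V + G.conk 3 - 1 = Nat.card {v // v ≠ y} + (G.map π).conk 3 - 1 + k by omega]
    exact ⟨(φ.trans (ψ.prodCongr (.refl _))).trans χ⟩
  · have : Unique V :=
      ⟨⟨v₀⟩, fun v => by_contra fun hv => hedge (exists_ends_ne_of_kConn_one hv (kConn_one v v₀))⟩
    have : Subsingleton (G.ConnClass 3) := ⟨Quotient.ind₂ fun u v => by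
      rw [Subsingleton.elim u v]⟩
    have conk_eq : G.conk 3 = 1 :=
      Nat.card_eq_one_iff_unique.2 ⟨inferInstance, ⟨G.connClass 3 v₀⟩⟩
    obtain ⟨φ⟩ := nonempty_wgroup_addEquiv_of_unique G A
    rw [conk_eq, Nat.card_unique]
    exact ⟨φ.trans (LinearEquiv.funUnique (Fin 1) ℤ A).symm.toAddEquiv⟩
termination_by Nat.card V
decreasing_by omega

end Counting

end Multigraph

namespace Multigraph

variable {V E : Type*} [Fintype V] [Fintype E] [DecidableEq V] [DecidableEq E]


theorem stmt19 (G : Multigraph V E) (hconn : G.con = 1)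
    (A : Type*) [AddCommGroup A] [Fintype A] :
    Nat.card {h : V ⊕ E → A // G.BalancedW h} =
      Fintype.card A ^ (Fintype.card V + G.conk 3 - 1) := by
  obtain ⟨φ⟩ := G.stmt19_general hconn A
  exact (Nat.card_congr φ.toEquiv).trans (by simp)

end Multigraph
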